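/- Let μ be a Borel probability measure on a separable metric space S, let ρ > 0, and let m ≥ 1 be an integer. Then ∫_S (1 − μ(B̄(p,ρ)))^m dμ(p) ≤ (1/(e·m)) ∫_S 1/μ(B̄(p,ρ)) dμ(p), where B̄(p,ρ) = {q ∈ S : dist(q,p) ≤ ρ} is the closed ball and the right-hand integral takes values in [0, ∞]. -/

import Mathlib

open MeasureTheory Metric ENNReal

theorem small_ball_aux_real (x : ℝ) (hx : 0 < x) (hx1 : x ≤ 1) (m : ℕ) (hm : 1 ≤ m) :
    (1 - x) ^ m ≤ (Real.exp 1 * m)⁻¹ * x⁻¹ := by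
  have hm' : (0 : ℝ) < m := by exact_mod_cast hm
  have h1 : (1 - x) ^ m ≤ Real.exp (-(m * x)) := by
    calc (1 - x) ^ m ≤ (Real.exp (-x)) ^ m :=
          pow_le_pow_left₀ (by linarith) (Real.one_sub_le_exp_neg x) m
      _ = Real.exp (-(m * x)) := by
          rw [← Real.exp_nat_mul]; congr 1; ring
  have h2 : Real.exp 1 * m * x ≤ Real.exp (m * x) := by
    have h3 := Real.add_one_le_exp (m * x - 1)
    have h4 : Real.exp (m * x) = Real.exp 1 * Real.exp (m * x - 1) := by
      rw [← Real.exp_add]; congr 1; ring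
    rw [h4, mul_assoc]
    exact mul_le_mul_of_nonneg_left (by linarith) (Real.exp_pos 1).le
  refine h1.trans ?_
  rw [Real.exp_neg, ← mul_inv]
  exact inv_anti₀ (by positivity) h2

theorem small_ball_aux (u : ENNReal) (hu : u ≤ 1) (m : ℕ) (hm : 1 ≤ m) :
    (1 - u) ^ m ≤ (ENNReal.ofReal (Real.exp 1) * m)⁻¹ * u⁻¹ := by
  have hm' : (0 : ℝ) < m := by exact_mod_cast hm
  have hut : u ≠ ⊤ := ne_top_of_le_ne_top ENNReal.one_ne_top hu
  rcases eq_or_ne u 0 with rfl | h0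
  · have : (ENNReal.ofReal (Real.exp 1) * m)⁻¹ ≠ 0 :=
      ENNReal.inv_ne_zero.2 (ENNReal.mul_ne_top ENNReal.ofReal_ne_top (ENNReal.natCast_ne_top m))
    rw [ENNReal.inv_zero, ENNReal.mul_top this]
    exact le_top
  · have hx : 0 < u.toReal := ENNReal.toReal_pos h0 hut
    have hx1 : u.toReal ≤ 1 := by
      simpa using ENNReal.toReal_mono ENNReal.one_ne_top hu
    have key := ENNReal.ofReal_le_ofReal (small_ball_aux_real u.toReal hx hx1 m hm)
    rw [ENNReal.ofReal_pow (by linarith), ENNReal.ofReal_sub _ hx.le, ENNReal.ofReal_one,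
      ENNReal.ofReal_mul (by positivity), ENNReal.ofReal_inv_of_pos (by positivity),
      ENNReal.ofReal_inv_of_pos hx, ENNReal.ofReal_mul (Real.exp_pos 1).le,
      ENNReal.ofReal_natCast, ENNReal.ofReal_toReal hut] at key
    exact key

/-- Small-ball inequality: for a Borel probability measure `μ` on a separable metric space,
`∫ (1 − μ(B̄(p,ρ)))^m dμ(p) ≤ (1/(e·m)) ∫ 1/μ(B̄(p,ρ)) dμ(p)`. -/
theorem small_ball_integral_bound {S : Type*} [MetricSpace S]
    [TopologicalSpace.SeparableSpace S] [MeasurableSpace S] [BorelSpace S]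
    (μ : Measure S) [IsProbabilityMeasure μ] (ρ : ℝ) (hρ : 0 < ρ)
    (m : ℕ) (hm : 1 ≤ m) :
    ∫⁻ p, (1 - μ (closedBall p ρ)) ^ m ∂μ
      ≤ (ENNReal.ofReal (Real.exp 1) * m)⁻¹ * ∫⁻ p, (μ (closedBall p ρ))⁻¹ ∂μ := by
  have hm' : (m : ENNReal) ≠ 0 := by
    exact_mod_cast (by lia : m ≠ 0)
  rw [← lintegral_const_mul']
  · exact lintegral_mono fun p => small_ball_aux _ prob_le_one m hm
  · refine ENNReal.inv_ne_top.2 (mul_ne_zero ?_ hm')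
    simpa using Real.exp_pos 1
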